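/- Let F be a field and let S_n act on the rational function field F(x_1, ..., x_n) by permuting variables. If V is a rational function of x_1, ..., x_n that is not left fixed by any nontrivial permutation of the variables (i.e., its stabilizer in S_n is trivial), then every rational function of x_1, ..., x_n is expressible as a rational function of the elementary symmetric polynomials σ_1, ..., σ_n and V; i.e., F(x_1, ..., x_n) = F(σ_1, ..., σ_n, V). -/

import Mathlib

open MvPolynomial

/-- The action of a permutation of the variables on the field of rational functions
`F(x₁, …, xₙ)`, realized as the fraction field of the polynomial ring. -/
noncomputable def permAct (F : Type*) [Field F] (n : ℕ) (σ : Equiv.Perm (Fin n)) :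
    FractionRing (MvPolynomial (Fin n) F) ≃+* FractionRing (MvPolynomial (Fin n) F) :=
  IsFractionRing.ringEquivOfRingEquiv (MvPolynomial.renameEquiv F σ).toRingEquiv

namespace Polynomial

/-- A field generated by the roots of a polynomial that factors into distinct linear factors is
Galois. -/
theorem isGalois_of_map_eq_prod_X_sub_C {E K ι : Type*} [Field E] [Field K] [Algebra E K]
    [Fintype ι] {x : ι → K} (hx : Function.Injective x) {p : E[X]}
    (hp : p.map (algebraMap E K) = ∏ i, (X - C (x i)))
    (htop : IntermediateField.adjoin E (Set.range x) = ⊤) : IsGalois E K := by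
  have hp0 : p ≠ 0 := by
    rintro rfl
    rw [Polynomial.map_zero] at hp
    exact (monic_prod_X_sub_C x Finset.univ).ne_zero hp.symm
  have hroots : p.rootSet K = Set.range x := by
    ext y
    rw [mem_rootSet_of_ne hp0, aeval_def, ← eval_map, hp, eval_prod, Finset.prod_eq_zero_iff]
    simp [sub_eq_zero, eq_comm]
  have : p.IsSplittingField E K := by
    rw [isSplittingField_iff_intermediateField, hroots, hp]
    exact ⟨Splits.prod fun i _ => Splits.X_sub_C (x i), htop⟩
  refine IsGalois.of_separable_splitting_field (p := p) ?_
  rw [← separable_map (algebraMap E K), hp]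
  exact separable_prod_X_sub_C_iff.2 hx

/-- An automorphism fixing the coefficients of `∏ i, (X - x i)` permutes the `x i`. -/
theorem exists_perm_of_map_eq_prod_X_sub_C {E K ι : Type*} [Field E] [Field K] [Algebra E K]
    [Fintype ι] {x : ι → K} (hx : Function.Injective x) {p : E[X]}
    (hp : p.map (algebraMap E K) = ∏ i, (X - C (x i))) (τ : K ≃ₐ[E] K) :
    ∃ σ : Equiv.Perm ι, ∀ i, τ (x i) = x (σ i) := by
  have h : ∀ i, ∃ j, τ (x i) = x j := fun i => by
    have h1 : aeval (x i) p = 0 := by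
      rw [aeval_def, ← eval_map, hp, eval_prod]
      exact Finset.prod_eq_zero (Finset.mem_univ i) (by simp)
    have h2 : aeval (τ (x i)) p = 0 := by rw [aeval_algHom_apply, h1, map_zero]
    rw [aeval_def, ← eval_map, hp, eval_prod, Finset.prod_eq_zero_iff] at h2
    simpa [sub_eq_zero] using h2
  choose σ hσ using h
  have hinj : Function.Injective σ := fun i j hij =>
    hx (τ.injective (by rw [hσ, hσ, hij]))
  exact ⟨Equiv.ofBijective σ (Finite.injective_iff_bijective.1 hinj), hσ⟩

end Polynomial

section FractionRing

variable (F : Type*) [Field F] (n : ℕ)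

/-- The variable `x i` viewed as a rational function. -/
noncomputable def ratVar (i : Fin n) : FractionRing (MvPolynomial (Fin n) F) :=
  algebraMap (MvPolynomial (Fin n) F) _ (X i)

theorem ratVar_injective : Function.Injective (ratVar F n) :=
  (IsFractionRing.injective _ _).comp (X_injective (R := F))

theorem permAct_ratVar (σ : Equiv.Perm (Fin n)) (i : Fin n) :
    permAct F n σ (ratVar F n i) = ratVar F n (σ i) := by
  rw [permAct, ratVar, IsFractionRing.ringEquivOfRingEquiv_algebraMap]
  simp [ratVar]

theorem permAct_algebraMap (σ : Equiv.Perm (Fin n)) (a : F) :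
    permAct F n σ (algebraMap F _ a) = algebraMap F _ a := by
  rw [IsScalarTower.algebraMap_apply F (MvPolynomial (Fin n) F), permAct,
    IsFractionRing.ringEquivOfRingEquiv_algebraMap]
  simp [algebraMap_eq]

variable {F n}

theorem intermediateField_eq_top_of_ratVar_mem
    (K : IntermediateField F (FractionRing (MvPolynomial (Fin n) F)))
    (hK : ∀ i, ratVar F n i ∈ K) : K = ⊤ := by
  have hpoly : ∀ p : MvPolynomial (Fin n) F, algebraMap _ (FractionRing _) p ∈ K := fun p => by
    induction p using MvPolynomial.induction_on with
    | C a =>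
      rw [← algebraMap_eq, ← IsScalarTower.algebraMap_apply]
      exact K.algebraMap_mem a
    | add p q hp hq => rw [map_add]; exact add_mem hp hq
    | mul_X p i hp => rw [map_mul]; exact mul_mem hp (hK i)
  refine eq_top_iff.2 fun z _ => ?_
  obtain ⟨p, q, -, rfl⟩ := IsFractionRing.div_surjective (A := MvPolynomial (Fin n) F) z
  exact div_mem (hpoly p) (hpoly q)

theorem adjoin_range_ratVar (E : IntermediateField F (FractionRing (MvPolynomial (Fin n) F))) :
    IntermediateField.adjoin E (Set.range (ratVar F n)) = ⊤ := by
  rw [← IntermediateField.restrictScalars_eq_top_iff (K := F)]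
  exact intermediateField_eq_top_of_ratVar_mem _ fun i =>
    IntermediateField.subset_adjoin E _ (Set.mem_range_self i)

/-- An automorphism that permutes the variables is the action of that permutation. -/
theorem eq_permAct_of_ratVar
    (τ : FractionRing (MvPolynomial (Fin n) F) ≃ₐ[F] FractionRing (MvPolynomial (Fin n) F))
    (σ : Equiv.Perm (Fin n)) (h : ∀ i, τ (ratVar F n i) = ratVar F n (σ i))
    (z : FractionRing (MvPolynomial (Fin n) F)) : permAct F n σ z = τ z := by
  let K : IntermediateField F (FractionRing (MvPolynomial (Fin n) F)) :=
    (RingHom.eqLocusField (permAct F n σ).toRingHom τ.toRingEquiv.toRingHom).toIntermediateField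
      fun a => (permAct_algebraMap F n σ a).trans (τ.commutes a).symm
  have htop : K = ⊤ := intermediateField_eq_top_of_ratVar_mem K fun i =>
    (permAct_ratVar F n σ i).trans (h i).symm
  exact (htop ▸ IntermediateField.mem_top : z ∈ K)

open Polynomial in
/-- If `E` contains the elementary symmetric polynomials, then `∏ i, (X - x i)` is defined
over `E`. -/
theorem exists_map_eq_prod_X_sub_C_ratVar
    (E : IntermediateField F (FractionRing (MvPolynomial (Fin n) F)))
    (hE : ∀ k : Fin n, algebraMap (MvPolynomial (Fin n) F) (FractionRing _)
      (esymm (Fin n) F ((k : ℕ) + 1)) ∈ E) :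
    ∃ p : E[X], p.map (algebraMap E (FractionRing (MvPolynomial (Fin n) F))) =
      ∏ i, (Polynomial.X - Polynomial.C (ratVar F n i)) := by
  have hesymm : ∀ k ≤ n, algebraMap (MvPolynomial (Fin n) F) (FractionRing _)
      (esymm (Fin n) F k) ∈ E
    | 0, _ => by simp
    | k + 1, hk => hE ⟨k, hk⟩
  let s := Finset.univ.val.map (ratVar F n)
  have hs : ∀ k, s.esymm k = algebraMap _ _ (esymm (Fin n) F k) := fun k => by
    rw [← aeval_esymm_eq_multiset_esymm (σ := Fin n) (R := F)]
    simp [esymm, ratVar]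
  have hcard : Multiset.card s = n := by simp [s]
  have hprod : ∏ i, (Polynomial.X - Polynomial.C (ratVar F n i)) =
      (s.map fun t => Polynomial.X - Polynomial.C t).prod := by
    rw [Multiset.map_map]
    rfl
  rw [← mem_lifts, lifts_iff_liftsRing, hprod, Multiset.prod_X_sub_X_eq_sum_esymm, hcard]
  refine sum_mem fun j hj => mul_mem (pow_mem (neg_mem (one_mem _)) _)
    (mul_mem ?_ (pow_mem (X_mem_lifts _) _))
  rw [hs]
  exact C_mem_lifts (algebraMap E _) ⟨_, hesymm j (Finset.mem_range_succ_iff.1 hj)⟩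

/-- An intermediate field containing the elementary symmetric polynomials and a rational function
with trivial stabilizer is the whole field of rational functions. -/
theorem intermediateField_eq_top_of_esymm_mem
    (E : IntermediateField F (FractionRing (MvPolynomial (Fin n) F)))
    (hE : ∀ k : Fin n, algebraMap (MvPolynomial (Fin n) F) (FractionRing _)
      (esymm (Fin n) F ((k : ℕ) + 1)) ∈ E)
    {V : FractionRing (MvPolynomial (Fin n) F)} (hVE : V ∈ E)
    (hV : ∀ σ : Equiv.Perm (Fin n), permAct F n σ V = V → σ = 1) : E = ⊤ := by
  obtain ⟨p, hp⟩ := exists_map_eq_prod_X_sub_C_ratVar E hE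
  have hx := ratVar_injective F n
  have := Polynomial.isGalois_of_map_eq_prod_X_sub_C hx hp (adjoin_range_ratVar E)
  refine eq_top_iff.2 fun z _ => ?_
  have hz : z ∈ Set.range (algebraMap E (FractionRing (MvPolynomial (Fin n) F))) := by
    rw [InfiniteGalois.mem_range_algebraMap_iff_fixed]
    intro τ
    obtain ⟨σ, hσ⟩ := Polynomial.exists_perm_of_map_eq_prod_X_sub_C hx hp τ
    have hact := eq_permAct_of_ratVar (τ.restrictScalars F) σ hσ
    obtain rfl : σ = 1 := hV σ ((hact V).trans (τ.commutes ⟨V, hVE⟩))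
    have hone := eq_permAct_of_ratVar (AlgEquiv.refl (R := F)) (1 : Equiv.Perm (Fin n))
      fun _ => rfl
    exact (hact z).symm.trans (hone z)
  obtain ⟨e, rfl⟩ := hz
  exact e.2

end FractionRing

/-- If a rational function `V` is not fixed by any nontrivial permutation of the
variables, then every rational function of `x₁, …, xₙ` is a rational function of the
elementary symmetric polynomials and `V`: `F(x₁,…,xₙ) = F(σ₁,…,σₙ,V)`. -/
theorem stmt_13 (F : Type*) [Field F] (n : ℕ)
    (V : FractionRing (MvPolynomial (Fin n) F))
    (hV : ∀ σ : Equiv.Perm (Fin n), permAct F n σ V = V → σ = 1) :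
    IntermediateField.adjoin F
      ((Set.range fun k : Fin n =>
          algebraMap (MvPolynomial (Fin n) F) (FractionRing (MvPolynomial (Fin n) F))
            (esymm (Fin n) F ((k : ℕ) + 1))) ∪ {V}) = ⊤ := by
  exact intermediateField_eq_top_of_esymm_mem _
    (fun k => IntermediateField.subset_adjoin F _ (Or.inl (Set.mem_range_self k)))
    (IntermediateField.subset_adjoin F _ (Or.inr rfl)) hV
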